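/- arXiv:2008.02455 — 3 statements merged into one kernel-verified Lean document; each statement's English description precedes it below -/
import Mathlib

section
/- Fix an integer K ≥ 2 and consider the IMH chain on {1, …, K+1} with target π given by π₁ = 1/2 and π_i = 1/(2K) for 2 ≤ i ≤ K+1, and proposal p given by p₁ = 1/4 and p_i = 3/(4K) for 2 ≤ i ≤ K+1 (so w₁ = 2 = w* and w_i = 2/3 for i ≠ 1), with transition matrix P(i,j) = p_j·min(1, w_j/w_i) for j ≠ i and P(i,i) = p_i + Σ_k p_k·max(0, 1 − w_k/w_i), where w_i = π_i/p_i. Then for every t ≥ 1 and every state i, ‖P^t(i,·) − π‖_TV = (1/2)^{t+1}; hence max_i ‖P^t(i,·) − π‖_TV = (1 − π₁)·(1 − 1/w*)^t. -/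
/-- The IMH transition matrix on a finite state space, for target pmf `tgt` and proposal
pmf `prp`: `P(i,j) = p_j·min(1, w_j/w_i)` for `j ≠ i` and
`P(i,i) = p_i + Σ_k p_k·max(0, 1 − w_k/w_i)`, where `w_i = π_i/p_i`. -/
noncomputable def imhMatrix {n : ℕ} (tgt prp : Fin n → ℝ) : Matrix (Fin n) (Fin n) ℝ :=
  Matrix.of fun i j =>
    if j = i then prp i + ∑ k, prp k * max 0 (1 - (tgt k / prp k) / (tgt i / prp i))
    else prp j * min 1 ((tgt j / prp j) / (tgt i / prp i))

/-- Total variation distance between two pmfs on a finite state space. -/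
noncomputable def tvFin {n : ℕ} (μ ν : Fin n → ℝ) : ℝ := (1 / 2) * ∑ j, |μ j - ν j|

/-- the target pmf on `{1, …, K+1}` (indexed by `Fin (K+1)`, state `1` being
index `0`): `π₁ = 1/2`, `π_i = 1/(2K)` otherwise. -/
noncomputable def tgt13 (K : ℕ) : Fin (K + 1) → ℝ :=
  fun i => if i = 0 then 1 / 2 else 1 / (2 * (K : ℝ))

/-- The proposal pmf: `p₁ = 1/4`, `p_i = 3/(4K)` otherwise. -/
noncomputable def prp13 (K : ℕ) : Fin (K + 1) → ℝ :=
  fun i => if i = 0 then 1 / 4 else 3 / (4 * (K : ℝ))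

/-!
Write `w = π / p`, let `m` be a state of maximal weight and put `r = 1 - 1 / w m`. A proposal `j`
made at `m` is accepted with probability `w j / w m`, so the row of `m` is `π + r • (δ m - π)`.
As `π` is stationary, `δ m - π` is a left eigenvector with eigenvalue `r`, and the chain started
from `π + c • (δ m - π)` has law `π + (c * r ^ t) • (δ m - π)` at time `t`, at total variation
distance `|c| * r ^ t * (1 - π m)` from `π`. When all states other than `m` share the same weight
`v`, each of them accepts every proposal, so its row is the proposal `p` itself, which again lies
on this line: `p = π + (1 - 1 / v) • (δ m - π)`.
-/

section IMH

open scoped Matrix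

/-- The importance weight `w_i = π_i / p_i` of the state `i`. -/
noncomputable def imhWeight {n : ℕ} (tgt prp : Fin n → ℝ) (i : Fin n) : ℝ := tgt i / prp i

variable {n : ℕ} {tgt prp : Fin n → ℝ} {i j m : Fin n}

lemma imhWeight_pos (htgt : ∀ k, 0 < tgt k) (hprp : ∀ k, 0 < prp k) (i : Fin n) :
    0 < imhWeight tgt prp i :=
  div_pos (htgt i) (hprp i)

lemma mul_imhWeight (hi : prp i ≠ 0) : prp i * imhWeight tgt prp i = tgt i :=
  mul_div_cancel₀ _ hi

lemma one_le_imhWeight_of_forall_le (hprp : ∀ k, 0 < prp k) (hsum_tgt : ∑ k, tgt k = 1)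
    (hsum_prp : ∑ k, prp k = 1) (hmax : ∀ k, imhWeight tgt prp k ≤ imhWeight tgt prp m) :
    1 ≤ imhWeight tgt prp m :=
  calc 1 = ∑ k, prp k * imhWeight tgt prp k := by
        simp only [mul_imhWeight (hprp _).ne', hsum_tgt]
    _ ≤ ∑ k, prp k * imhWeight tgt prp m :=
        Finset.sum_le_sum fun k _ => mul_le_mul_of_nonneg_left (hmax k) (hprp k).le
    _ = imhWeight tgt prp m := by rw [← Finset.sum_mul, hsum_prp, one_mul]

lemma imhMatrix_apply (hi : imhWeight tgt prp i ≠ 0) (j : Fin n) :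
    imhMatrix tgt prp i j = prp j * min 1 (imhWeight tgt prp j / imhWeight tgt prp i) +
      if j = i then ∑ k, prp k * (1 - min 1 (imhWeight tgt prp k / imhWeight tgt prp i))
      else 0 := by
  have max_eq (x : ℝ) : max 0 (1 - x) = 1 - min 1 x := by rw [← max_sub_sub_left, sub_self]
  simp only [imhMatrix, Matrix.of_apply, max_eq, ← imhWeight.eq_def]
  split_ifs with hji
  · rw [hji, div_self hi, min_self, mul_one]
  · rw [add_zero]

lemma sum_imhMatrix (hi : imhWeight tgt prp i ≠ 0) :
    ∑ j, imhMatrix tgt prp i j = ∑ j, prp j := by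
  simp only [imhMatrix_apply hi, Finset.sum_add_distrib, Finset.sum_ite_eq', Finset.mem_univ,
    if_true]
  rw [← Finset.sum_add_distrib]
  exact Finset.sum_congr rfl fun j _ => by ring

lemma tgt_mul_imhMatrix_of_ne (hi : 0 < imhWeight tgt prp i) (hij : i ≠ j) :
    tgt i * imhMatrix tgt prp i j =
      prp i * prp j * min (imhWeight tgt prp i) (imhWeight tgt prp j) := by
  have hprp : prp i ≠ 0 := fun h => by simp [imhWeight, h] at hi
  rw [imhMatrix_apply hi.ne', if_neg hij.symm, add_zero, ← mul_imhWeight (tgt := tgt) hprp,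
    mul_mul_mul_comm, mul_min_of_nonneg _ _ hi.le, mul_one, mul_div_cancel₀ _ hi.ne']

lemma imhMatrix_detailed_balance (hw : ∀ k, 0 < imhWeight tgt prp k) (i j : Fin n) :
    tgt i * imhMatrix tgt prp i j = tgt j * imhMatrix tgt prp j i := by
  obtain rfl | hij := eq_or_ne i j
  · rfl
  · rw [tgt_mul_imhMatrix_of_ne (hw i) hij, tgt_mul_imhMatrix_of_ne (hw j) hij.symm,
      min_comm, mul_comm (prp i)]

lemma vecMul_imhMatrix (hw : ∀ k, 0 < imhWeight tgt prp k) (hsum_prp : ∑ k, prp k = 1) :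
    tgt ᵥ* imhMatrix tgt prp = tgt := by
  ext j
  calc ∑ i, tgt i * imhMatrix tgt prp i j = ∑ i, tgt j * imhMatrix tgt prp j i :=
        Finset.sum_congr rfl fun i _ => imhMatrix_detailed_balance hw i j
    _ = tgt j := by rw [← Finset.mul_sum, sum_imhMatrix (hw j).ne', hsum_prp, mul_one]

lemma imhMatrix_row_of_forall_le (hw : ∀ k, 0 < imhWeight tgt prp k)
    (hsum_tgt : ∑ k, tgt k = 1) (hsum_prp : ∑ k, prp k = 1)
    (hmax : ∀ k, imhWeight tgt prp k ≤ imhWeight tgt prp m) :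
    imhMatrix tgt prp m = tgt + (1 - 1 / imhWeight tgt prp m) • (Pi.single m 1 - tgt) := by
  have accepted (k : Fin n) : prp k * min 1 (imhWeight tgt prp k / imhWeight tgt prp m) =
      tgt k / imhWeight tgt prp m := by
    have hprp : prp k ≠ 0 := fun h => by simpa [imhWeight, h] using hw k
    rw [min_eq_right (div_le_one_of_le₀ (hmax k) (hw m).le), ← mul_div_assoc, mul_imhWeight hprp]
  have rejected : ∑ k, prp k * (1 - min 1 (imhWeight tgt prp k / imhWeight tgt prp m)) =
      1 - 1 / imhWeight tgt prp m := by
    simp only [mul_sub, mul_one, accepted, Finset.sum_sub_distrib, ← Finset.sum_div, hsum_tgt,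
      hsum_prp]
  ext j
  rw [imhMatrix_apply (hw m).ne', accepted, rejected]
  simp only [Pi.add_apply, Pi.smul_apply, Pi.sub_apply, Pi.single_apply, smul_eq_mul]
  split_ifs <;> ring

lemma imhMatrix_row_of_forall_ge (hi : 0 < imhWeight tgt prp i)
    (hmin : ∀ k, imhWeight tgt prp i ≤ imhWeight tgt prp k) : imhMatrix tgt prp i = prp := by
  have always_accepted (k : Fin n) : min 1 (imhWeight tgt prp k / imhWeight tgt prp i) = 1 :=
    min_eq_left ((one_le_div hi).2 (hmin k))
  ext j
  simp [imhMatrix_apply hi.ne', always_accepted]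

lemma add_smul_single_sub_vecMul_imhMatrix_pow (hw : ∀ k, 0 < imhWeight tgt prp k)
    (hsum_tgt : ∑ k, tgt k = 1) (hsum_prp : ∑ k, prp k = 1)
    (hmax : ∀ k, imhWeight tgt prp k ≤ imhWeight tgt prp m) (c : ℝ) (t : ℕ) :
    (tgt + c • (Pi.single m 1 - tgt)) ᵥ* imhMatrix tgt prp ^ t =
      tgt + (c * (1 - 1 / imhWeight tgt prp m) ^ t) • (Pi.single m 1 - tgt) := by
  have stationary := vecMul_imhMatrix hw hsum_prp
  have eigenvector : (Pi.single m 1 - tgt) ᵥ* imhMatrix tgt prp =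
      (1 - 1 / imhWeight tgt prp m) • (Pi.single m 1 - tgt) := by
    rw [Matrix.sub_vecMul, Matrix.single_one_vecMul, stationary, Matrix.row,
      imhMatrix_row_of_forall_le hw hsum_tgt hsum_prp hmax, add_sub_cancel_left]
  induction t with
  | zero => simp
  | succ t ih =>
    rw [pow_succ, ← Matrix.vecMul_vecMul, ih, Matrix.add_vecMul, Matrix.smul_vecMul, stationary,
      eigenvector, smul_smul, mul_assoc, pow_succ]

lemma tvFin_add_smul_single_sub (htgt : ∀ k, 0 ≤ tgt k) (hsum_tgt : ∑ k, tgt k = 1)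
    (m : Fin n) (c : ℝ) :
    tvFin (tgt + c • (Pi.single m 1 - tgt)) tgt = |c| * (1 - tgt m) := by
  have htgt_le : tgt m ≤ 1 :=
    hsum_tgt ▸ Finset.single_le_sum (fun k _ => htgt k) (Finset.mem_univ m)
  have abs_eq (j : Fin n) : |(Pi.single m 1 : Fin n → ℝ) j - tgt j| =
      tgt j + if j = m then 1 - 2 * tgt m else 0 := by
    obtain rfl | hjm := eq_or_ne j m
    · rw [Pi.single_eq_same, if_pos rfl, abs_of_nonneg (sub_nonneg.2 htgt_le)]
      ring
    · rw [Pi.single_eq_of_ne hjm, if_neg hjm, zero_sub, abs_neg, abs_of_nonneg (htgt j), add_zero]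
  simp only [tvFin, Pi.add_apply, Pi.smul_apply, Pi.sub_apply, smul_eq_mul, add_sub_cancel_left,
    abs_mul, abs_eq, ← Finset.mul_sum, Finset.sum_add_distrib, hsum_tgt, Finset.sum_ite_eq',
    Finset.mem_univ, if_true]
  ring

lemma tvFin_vecMul_imhMatrix_pow (htgt : ∀ k, 0 < tgt k) (hprp : ∀ k, 0 < prp k)
    (hsum_tgt : ∑ k, tgt k = 1) (hsum_prp : ∑ k, prp k = 1)
    (hmax : ∀ k, imhWeight tgt prp k ≤ imhWeight tgt prp m) (c : ℝ) (t : ℕ) :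
    tvFin ((tgt + c • (Pi.single m 1 - tgt)) ᵥ* imhMatrix tgt prp ^ t) tgt =
      |c| * (1 - 1 / imhWeight tgt prp m) ^ t * (1 - tgt m) := by
  have rate_nonneg : 0 ≤ 1 - 1 / imhWeight tgt prp m :=
    sub_nonneg.2 (div_le_one_of_le₀ (one_le_imhWeight_of_forall_le hprp hsum_tgt hsum_prp hmax)
      (imhWeight_pos htgt hprp m).le)
  rw [add_smul_single_sub_vecMul_imhMatrix_pow (imhWeight_pos htgt hprp) hsum_tgt hsum_prp hmax,
    tvFin_add_smul_single_sub (fun k => (htgt k).le) hsum_tgt, abs_mul,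
    abs_of_nonneg (pow_nonneg rate_nonneg t)]

theorem tvFin_imhMatrix_pow_of_forall_le (htgt : ∀ k, 0 < tgt k) (hprp : ∀ k, 0 < prp k)
    (hsum_tgt : ∑ k, tgt k = 1) (hsum_prp : ∑ k, prp k = 1)
    (hmax : ∀ k, imhWeight tgt prp k ≤ imhWeight tgt prp m) (t : ℕ) :
    tvFin ((imhMatrix tgt prp ^ t) m) tgt =
      (1 - 1 / imhWeight tgt prp m) ^ t * (1 - tgt m) := by
  simpa [Matrix.single_one_vecMul, Matrix.row] using
    tvFin_vecMul_imhMatrix_pow htgt hprp hsum_tgt hsum_prp hmax 1 t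

lemma prp_eq_of_imhWeight_eq_of_ne {v : ℝ} (hv : v ≠ 0) (hsum_tgt : ∑ k, tgt k = 1)
    (hsum_prp : ∑ k, prp k = 1) (hweight : ∀ k ≠ m, imhWeight tgt prp k = v) :
    prp = tgt + (1 - 1 / v) • (Pi.single m 1 - tgt) := by
  have off_m (k : Fin n) (hk : k ≠ m) : prp k = tgt k / v := by
    have hprp : prp k ≠ 0 := fun h => hv (by rw [← hweight k hk, imhWeight, h, div_zero])
    rw [eq_div_iff hv, ← hweight k hk, mul_imhWeight hprp]
  have at_m : prp m = 1 - (1 - tgt m) / v :=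
    calc prp m = 1 - ∑ k ∈ Finset.univ.erase m, prp k := by
          rw [Finset.sum_erase_eq_sub (Finset.mem_univ m), hsum_prp, sub_sub_cancel]
      _ = 1 - (∑ k ∈ Finset.univ.erase m, tgt k) / v := by
          rw [Finset.sum_div, Finset.sum_congr rfl fun k hk => off_m k (Finset.ne_of_mem_erase hk)]
      _ = 1 - (1 - tgt m) / v := by
          rw [Finset.sum_erase_eq_sub (Finset.mem_univ m), hsum_tgt]
  ext j
  simp only [Pi.add_apply, Pi.smul_apply, Pi.sub_apply, smul_eq_mul]
  obtain rfl | hjm := eq_or_ne j m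
  · rw [Pi.single_eq_same, at_m]
    ring
  · rw [Pi.single_eq_of_ne hjm, off_m j hjm]
    ring

theorem tvFin_imhMatrix_pow_of_imhWeight_eq_of_ne {v : ℝ} (htgt : ∀ k, 0 < tgt k)
    (hprp : ∀ k, 0 < prp k) (hsum_tgt : ∑ k, tgt k = 1) (hsum_prp : ∑ k, prp k = 1)
    (hweight : ∀ k ≠ m, imhWeight tgt prp k = v) (hvm : v ≤ imhWeight tgt prp m) (him : i ≠ m)
    (t : ℕ) :
    tvFin ((imhMatrix tgt prp ^ (t + 1)) i) tgt =
      |1 - 1 / v| * (1 - 1 / imhWeight tgt prp m) ^ t * (1 - tgt m) := by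
  have hw := imhWeight_pos htgt hprp
  have hmax (k : Fin n) : imhWeight tgt prp k ≤ imhWeight tgt prp m := by
    obtain rfl | hk := eq_or_ne k m
    exacts [le_rfl, (hweight k hk).trans_le hvm]
  have hmin (k : Fin n) : imhWeight tgt prp i ≤ imhWeight tgt prp k := by
    obtain rfl | hk := eq_or_ne k m
    exacts [hmax i, (hweight i him).trans_le (hweight k hk).ge]
  have hv_ne : v ≠ 0 := hweight i him ▸ (hw i).ne'
  have row_eq : (imhMatrix tgt prp ^ (t + 1)) i =
      (tgt + (1 - 1 / v) • (Pi.single m 1 - tgt)) ᵥ* imhMatrix tgt prp ^ t := by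
    rw [← prp_eq_of_imhWeight_eq_of_ne hv_ne hsum_tgt hsum_prp hweight, pow_succ',
      Matrix.mul_apply_eq_vecMul, imhMatrix_row_of_forall_ge (hw i) hmin]
  rw [row_eq, tvFin_vecMul_imhMatrix_pow htgt hprp hsum_tgt hsum_prp hmax]

end IMH

section Example

variable {K : ℕ}

lemma tgt13_pos (hK : 0 < K) (i : Fin (K + 1)) : 0 < tgt13 K i := by
  unfold tgt13
  split_ifs <;> positivity

lemma prp13_pos (hK : 0 < K) (i : Fin (K + 1)) : 0 < prp13 K i := by
  unfold prp13
  split_ifs <;> positivity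

lemma sum_tgt13 (hK : K ≠ 0) : ∑ i, tgt13 K i = 1 := by
  simp only [tgt13, Fin.sum_univ_succ, Fin.succ_ne_zero, if_true, if_false, Finset.sum_const,
    Finset.card_univ, Fintype.card_fin, nsmul_eq_mul]
  field_simp
  norm_num

lemma sum_prp13 (hK : K ≠ 0) : ∑ i, prp13 K i = 1 := by
  simp only [prp13, Fin.sum_univ_succ, Fin.succ_ne_zero, if_true, if_false, Finset.sum_const,
    Finset.card_univ, Fintype.card_fin, nsmul_eq_mul]
  field_simp
  norm_num

lemma tgt13_zero (K : ℕ) : tgt13 K 0 = 1 / 2 := if_pos rfl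

lemma imhWeight_tgt13_prp13_zero (K : ℕ) : imhWeight (tgt13 K) (prp13 K) 0 = 2 := by
  norm_num [imhWeight, tgt13, prp13]

lemma imhWeight_tgt13_prp13_of_ne_zero (hK : K ≠ 0) {i : Fin (K + 1)} (hi : i ≠ 0) :
    imhWeight (tgt13 K) (prp13 K) i = 2 / 3 := by
  simp only [imhWeight, tgt13, prp13, hi, if_false]
  field_simp
  norm_num

lemma imhWeight_tgt13_prp13_le (hK : K ≠ 0) (i : Fin (K + 1)) :
    imhWeight (tgt13 K) (prp13 K) i ≤ imhWeight (tgt13 K) (prp13 K) 0 := by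
  rw [imhWeight_tgt13_prp13_zero]
  obtain rfl | hi := eq_or_ne i 0
  · exact (imhWeight_tgt13_prp13_zero K).le
  · norm_num [imhWeight_tgt13_prp13_of_ne_zero hK hi]

lemma tvFin_imhMatrix_tgt13_prp13_pow_succ (hK : 0 < K) (t : ℕ) (i : Fin (K + 1)) :
    tvFin ((imhMatrix (tgt13 K) (prp13 K) ^ (t + 1)) i) (tgt13 K) = (1 / 2) ^ (t + 2) := by
  have weight_zero := imhWeight_tgt13_prp13_zero K
  obtain rfl | hi := eq_or_ne i 0
  · rw [tvFin_imhMatrix_pow_of_forall_le (tgt13_pos hK) (prp13_pos hK) (sum_tgt13 hK.ne')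
      (sum_prp13 hK.ne') (imhWeight_tgt13_prp13_le hK.ne'), weight_zero, tgt13_zero]
    ring
  · have abs_coeff : |1 - 1 / (2 / 3 : ℝ)| = 1 / 2 := by norm_num
    rw [tvFin_imhMatrix_pow_of_imhWeight_eq_of_ne (tgt13_pos hK) (prp13_pos hK)
      (sum_tgt13 hK.ne') (sum_prp13 hK.ne')
      (fun k hk => imhWeight_tgt13_prp13_of_ne_zero hK.ne' hk)
      (by rw [weight_zero]; norm_num) hi, weight_zero, tgt13_zero, abs_coeff]
    ring

end Example

/-- for this IMH chain (for which `w₁ = 2 = w*`), for every `t ≥ 1` and every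
state `i`, `‖Pᵗ(i,·) − π‖_TV = (1/2)^{t+1}`; hence
`max_i ‖Pᵗ(i,·) − π‖_TV = (1 − π₁)(1 − 1/w*)ᵗ`. -/
theorem imh_lower_example_tv (K : ℕ) (hK : 2 ≤ K) :
    ∀ t : ℕ, 1 ≤ t →
      (∀ i : Fin (K + 1),
          tvFin ((imhMatrix (tgt13 K) (prp13 K) ^ t) i) (tgt13 K) = (1 / 2) ^ (t + 1))
        ∧ (⨆ i, tvFin ((imhMatrix (tgt13 K) (prp13 K) ^ t) i) (tgt13 K)) =
            (1 - tgt13 K 0) * (1 - 1 / (tgt13 K 0 / prp13 K 0)) ^ t := by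
  intro t ht
  have tv_eq (i : Fin (K + 1)) :
      tvFin ((imhMatrix (tgt13 K) (prp13 K) ^ t) i) (tgt13 K) = (1 / 2) ^ (t + 1) := by
    obtain ⟨s, rfl⟩ := Nat.exists_eq_add_of_le' ht
    exact tvFin_imhMatrix_tgt13_prp13_pow_succ (by lia) s i
  refine ⟨tv_eq, ?_⟩
  simp only [tv_eq, ciSup_const]
  rw [← imhWeight, imhWeight_tgt13_prp13_zero, tgt13_zero]
  ring
end

section
/- For the IMH transition matrix P on the finite state space X = {1, …, m}: the vector of all ones is a right eigenvector with eigenvalue λ₀ = 1; for each k = 1, …, m−1, the vector v_k ∈ ℝ^m with (v_k)_i = 0 for i < k, (v_k)_k = S_π(k+1) := Σ_{j=k+1}^m π_j, and (v_k)_i = −π_k for i > k, is a right eigenvector of P with eigenvalue λ_k = Σ_{i=k}^m (p_i − π_i/w_k); the eigenvalues satisfy 1 > λ₁ ≥ λ₂ ≥ … ≥ λ_{m−1} ≥ 0; and the eigenvectors are π-orthogonal, i.e. Σ_l (v_i)_l·(v_j)_l·π_l = 0 whenever i ≠ j. -/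
/-- Eigenvalue `λ_k = Σ_{i=k}^m (p_i − π_i/w_k)` of the IMH matrix (0-indexed: the
eigen-index `κ` corresponds to the original index `k = κ + 1`, and original state `i`
corresponds to index `i − 1`). -/
noncomputable def imhEigVal {n : ℕ} (tgt prp : Fin n → ℝ) (κ : Fin n) : ℝ :=
  ∑ i, if κ ≤ i then prp i - tgt i / (tgt κ / prp κ) else 0

/-- Eigenvector `v_k = (0, …, 0, S_π(k+1), −π_k, …, −π_k)ᵀ` of the IMH matrix
(0-indexed as in `imhEigVal`), where `S_π(k+1) = Σ_{j=k+1}^m π_j`. -/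
noncomputable def imhEigVec {n : ℕ} (tgt prp : Fin n → ℝ) (κ : Fin n) : Fin n → ℝ :=
  fun i => if i < κ then 0
    else if i = κ then ∑ j, (if κ < j then tgt j else 0)
    else -tgt κ

/-!
In state `i` a proposal `j < i` is always accepted while a proposal `j > i` is accepted with
probability `w_j / w_i`. So row `i` of `P` agrees with `p` to the left of the diagonal and with
`π / w_i` to the right of it, and the mass rejected at `κ` is exactly `λ_κ`, giving
`P(κ,κ) = p_κ + λ_κ`. Pairing the vector `v_κ` with any `f` gives
`S_π(κ+1) f_κ - π_κ ∑_{j > κ} f_j`. Taking for `f` the rows of `P` yields the eigenvector equation,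
and taking `f = v_κ' π` with `κ' < κ`, which is a multiple of `π` on `[κ, ∞)`, yields orthogonality.
-/

section

open Finset

variable {n : ℕ} {tgt prp : Fin n → ℝ} {i j κ κ' : Fin n}

theorem sum_imhMatrix_row (hi : tgt i / prp i ≠ 0) :
    ∑ j, imhMatrix tgt prp i j = ∑ j, prp j := by
  set r : Fin n → ℝ := fun k => (tgt k / prp k) / (tgt i / prp i)
  have accept_add_reject (k : Fin n) : min 1 (r k) + max 0 (1 - r k) = 1 := by
    rw [← sub_self (1 : ℝ), max_sub_sub_left, add_sub_cancel]
  have entry (j : Fin n) : imhMatrix tgt prp i j =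
      prp j * min 1 (r j) + if j = i then ∑ k, prp k * max 0 (1 - r k) else 0 := by
    rcases eq_or_ne j i with rfl | hj
    · simp [imhMatrix, r, div_self hi]
    · simp [imhMatrix, r, hj]
  calc ∑ j, imhMatrix tgt prp i j
      = ∑ j, prp j * min 1 (r j) + ∑ j, prp j * max 0 (1 - r j) := by
        simp [entry, sum_add_distrib]
    _ = ∑ j, prp j := by
        simp only [← sum_add_distrib, ← mul_add, accept_add_reject, mul_one]

theorem imhMatrix_mulVec_one (hw : ∀ i, tgt i / prp i ≠ 0) :
    (imhMatrix tgt prp).mulVec (fun _ => 1) = fun _ => ∑ i, prp i := by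
  funext i
  simp only [Matrix.mulVec, dotProduct, mul_one, sum_imhMatrix_row (hw i)]

theorem imhEigVec_of_lt (h : i < κ) : imhEigVec tgt prp κ i = 0 := by
  simp [imhEigVec, h]

theorem imhEigVec_self : imhEigVec tgt prp κ κ = ∑ j ∈ Ioi κ, tgt j := by
  simp [imhEigVec, ← sum_filter, filter_lt_eq_Ioi]

theorem imhEigVec_of_gt (h : κ < i) : imhEigVec tgt prp κ i = -tgt κ := by
  simp [imhEigVec, h.not_gt, h.ne']

theorem imhEigVec_dotProduct (f : Fin n → ℝ) :
    imhEigVec tgt prp κ ⬝ᵥ f = (∑ j ∈ Ioi κ, tgt j) * f κ - tgt κ * ∑ j ∈ Ioi κ, f j := by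
  have support (j : Fin n) (hj : j ∉ Ici κ) : imhEigVec tgt prp κ j * f j = 0 := by
    rw [imhEigVec_of_lt (not_le.1 (mt mem_Ici.2 hj)), zero_mul]
  have tail : ∑ j ∈ Ioi κ, imhEigVec tgt prp κ j * f j = -tgt κ * ∑ j ∈ Ioi κ, f j := by
    rw [mul_sum]
    exact sum_congr rfl fun j hj => by rw [imhEigVec_of_gt (mem_Ioi.1 hj)]
  rw [dotProduct, ← sum_subset (subset_univ (Ici κ)) fun j _ => support j, ← Ioi_insert,
    sum_insert (by simp), tail, imhEigVec_self]
  ring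

theorem imhEigVec_orthogonal_of_lt (h : κ < κ') :
    ∑ l, imhEigVec tgt prp κ l * imhEigVec tgt prp κ' l * tgt l = 0 := by
  have tail : ∑ l ∈ Ioi κ', imhEigVec tgt prp κ l * tgt l = -tgt κ * ∑ l ∈ Ioi κ', tgt l := by
    rw [mul_sum]
    exact sum_congr rfl fun l hl => by rw [imhEigVec_of_gt (h.trans (mem_Ioi.1 hl))]
  calc ∑ l, imhEigVec tgt prp κ l * imhEigVec tgt prp κ' l * tgt l
      = imhEigVec tgt prp κ' ⬝ᵥ fun l => imhEigVec tgt prp κ l * tgt l :=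
        sum_congr rfl fun l _ => by ring
    _ = (∑ l ∈ Ioi κ', tgt l) * (-tgt κ * tgt κ') -
          tgt κ' * (-tgt κ * ∑ l ∈ Ioi κ', tgt l) := by
        rw [imhEigVec_dotProduct, imhEigVec_of_gt h, tail]
    _ = 0 := by ring

theorem imhEigVec_pairwise_orthogonal : Pairwise fun κ κ' : Fin n =>
    ∑ l, imhEigVec tgt prp κ l * imhEigVec tgt prp κ' l * tgt l = 0 := by
  intro κ κ' hne
  rcases hne.lt_or_gt with h | h
  · exact imhEigVec_orthogonal_of_lt h
  · simpa only [mul_comm (imhEigVec tgt prp κ _)] using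
      imhEigVec_orthogonal_of_lt (prp := prp) h

theorem imhEigVal_lt_sum (htgt : ∀ i, 0 < tgt i) (hprp : ∀ i, 0 < prp i) (κ : Fin n) :
    imhEigVal tgt prp κ < ∑ i, prp i := by
  refine sum_lt_sum_of_nonempty ⟨κ, mem_univ κ⟩ fun i _ => ?_
  split_ifs
  · exact sub_lt_self _ (div_pos (htgt i) (div_pos (htgt κ) (hprp κ)))
  · exact hprp i

theorem imhEigVal_eq_sum_Ioi (hκ : tgt κ ≠ 0) :
    imhEigVal tgt prp κ = ∑ i ∈ Ioi κ, prp i - (∑ i ∈ Ioi κ, tgt i) / (tgt κ / prp κ) := by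
  rw [imhEigVal, ← sum_filter, filter_le_eq_Ici, ← Ioi_insert, sum_insert (by simp),
    div_div_cancel₀ hκ, sub_self, zero_add, sum_sub_distrib, sum_div]

section Antitone

variable (htgt : ∀ i, 0 < tgt i) (hprp : ∀ i, 0 < prp i) (hw : Antitone (tgt / prp))
include htgt hprp hw

theorem tgt_div_weight_le_prp (h : κ ≤ i) : tgt i / (tgt κ / prp κ) ≤ prp i := by
  rw [div_le_iff₀ (div_pos (htgt κ) (hprp κ)), ← div_le_iff₀' (hprp i)]
  exact hw h

theorem imhEigVal_nonneg (κ : Fin n) : 0 ≤ imhEigVal tgt prp κ := by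
  refine sum_nonneg fun i _ => ?_
  split_ifs with h
  · exact sub_nonneg.2 (tgt_div_weight_le_prp htgt hprp hw h)
  · exact le_rfl

theorem imhEigVal_antitone : Antitone (imhEigVal tgt prp) := by
  intro κ κ' h
  refine sum_le_sum fun i _ => ?_
  by_cases hκ' : κ' ≤ i
  · rw [if_pos hκ', if_pos (h.trans hκ')]
    exact sub_le_sub_left (div_le_div_of_nonneg_left (htgt i).le
      (div_pos (htgt κ') (hprp κ')) (hw h)) _
  · rw [if_neg hκ']
    split_ifs with hκ
    · exact sub_nonneg.2 (tgt_div_weight_le_prp htgt hprp hw hκ)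
    · exact le_rfl

theorem imhMatrix_of_lt (h : i < j) : imhMatrix tgt prp i j = tgt j / (tgt i / prp i) := by
  have ratio_le_one : (tgt j / prp j) / (tgt i / prp i) ≤ 1 :=
    (div_le_one (div_pos (htgt i) (hprp i))).2 (hw h.le)
  rw [imhMatrix, Matrix.of_apply, if_neg h.ne', min_eq_right ratio_le_one, ← mul_div_assoc,
    mul_div_cancel₀ _ (hprp j).ne']

theorem imhMatrix_of_gt (h : j < i) : imhMatrix tgt prp i j = prp j := by
  have one_le_ratio : 1 ≤ (tgt j / prp j) / (tgt i / prp i) :=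
    (one_le_div (div_pos (htgt i) (hprp i))).2 (hw h.le)
  rw [imhMatrix, Matrix.of_apply, if_neg h.ne, min_eq_left one_le_ratio, mul_one]

theorem imhMatrix_self (κ : Fin n) :
    imhMatrix tgt prp κ κ = prp κ + imhEigVal tgt prp κ := by
  have hwκ : 0 < tgt κ / prp κ := div_pos (htgt κ) (hprp κ)
  rw [imhMatrix, Matrix.of_apply, if_pos rfl, imhEigVal]
  refine congrArg (prp κ + ·) (sum_congr rfl fun k _ => ?_)
  split_ifs with h
  · have hk : tgt k / prp k ≤ tgt κ / prp κ := hw h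
    rw [max_eq_right (sub_nonneg.2 ((div_le_one hwκ).2 hk)), mul_sub, mul_one,
      ← mul_div_assoc, mul_div_cancel₀ _ (hprp k).ne']
  · have hk : tgt κ / prp κ ≤ tgt k / prp k := hw (not_le.1 h).le
    rw [max_eq_left (sub_nonpos.2 ((one_le_div hwκ).2 hk)), mul_zero]

theorem sum_Ioi_imhMatrix_of_le (h : i ≤ κ) :
    ∑ j ∈ Ioi κ, imhMatrix tgt prp i j = (∑ j ∈ Ioi κ, tgt j) / (tgt i / prp i) := by
  rw [sum_div]
  exact sum_congr rfl fun j hj => imhMatrix_of_lt htgt hprp hw (h.trans_lt (mem_Ioi.1 hj))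

theorem sum_Ioi_imhMatrix_of_gt (h : κ < i) :
    ∑ j ∈ Ioi κ, imhMatrix tgt prp i j = ∑ j ∈ Ioi κ, prp j := by
  have head : ∑ j ∈ (Ioi κ)ᶜ, imhMatrix tgt prp i j = ∑ j ∈ (Ioi κ)ᶜ, prp j :=
    sum_congr rfl fun j hj => by
      have hjκ : j ≤ κ := not_lt.1 (mt mem_Ioi.2 (mem_compl.1 hj))
      exact imhMatrix_of_gt htgt hprp hw (hjκ.trans_lt h)
  have row := sum_imhMatrix_row (div_pos (htgt i) (hprp i)).ne'
  rw [← sum_compl_add_sum (Ioi κ), ← sum_compl_add_sum (Ioi κ) prp, head] at row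
  exact add_left_cancel row

theorem imhMatrix_mulVec_imhEigVec (κ : Fin n) :
    (imhMatrix tgt prp).mulVec (imhEigVec tgt prp κ) =
      imhEigVal tgt prp κ • imhEigVec tgt prp κ := by
  funext i
  have htgtκ := (htgt κ).ne'
  rw [Matrix.mulVec, dotProduct_comm, imhEigVec_dotProduct, Pi.smul_apply, smul_eq_mul]
  rcases lt_trichotomy i κ with h | rfl | h
  · rw [imhMatrix_of_lt htgt hprp hw h, sum_Ioi_imhMatrix_of_le htgt hprp hw h.le,
      imhEigVec_of_lt h]
    ring
  · rw [imhMatrix_self htgt hprp hw, sum_Ioi_imhMatrix_of_le htgt hprp hw le_rfl,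
      imhEigVec_self]
    field_simp
    ring
  · rw [imhMatrix_of_gt htgt hprp hw h, sum_Ioi_imhMatrix_of_gt htgt hprp hw h,
      imhEigVec_of_gt h, imhEigVal_eq_sum_Ioi htgtκ]
    field_simp
    ring

end Antitone

end

theorem imh_finite_eigen_general {n : ℕ} {tgt prp : Fin n → ℝ}
    (htgt : ∀ i, 0 < tgt i) (hprp : ∀ i, 0 < prp i) (hw : Antitone (tgt / prp)) :
    ((imhMatrix tgt prp).mulVec (fun _ => 1) = fun _ => ∑ i, prp i)
    ∧ (∀ κ, (imhMatrix tgt prp).mulVec (imhEigVec tgt prp κ) =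
        imhEigVal tgt prp κ • imhEigVec tgt prp κ)
    ∧ (∀ κ, imhEigVal tgt prp κ < ∑ i, prp i)
    ∧ Antitone (imhEigVal tgt prp)
    ∧ (∀ κ, 0 ≤ imhEigVal tgt prp κ)
    ∧ Pairwise fun κ κ' =>
        ∑ l, imhEigVec tgt prp κ l * imhEigVec tgt prp κ' l * tgt l = 0 :=
  ⟨imhMatrix_mulVec_one fun i => (div_pos (htgt i) (hprp i)).ne',
    imhMatrix_mulVec_imhEigVec htgt hprp hw,
    imhEigVal_lt_sum htgt hprp,
    imhEigVal_antitone htgt hprp hw,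
    imhEigVal_nonneg htgt hprp hw,
    imhEigVec_pairwise_orthogonal⟩

/-- Liu: spectral decomposition of the finite IMH transition matrix on
`{1, …, m}` (here `Fin (m+2)`): the all-ones vector is a right eigenvector with eigenvalue
`1`; for `k = 1, …, m−1` (indices `κ` with `κ + 1 < m + 2`), `v_k` is a right eigenvector
with eigenvalue `λ_k`; `1 > λ₁ ≥ λ₂ ≥ … ≥ λ_{m−1} ≥ 0`; and the eigenvectors are
`π`-orthogonal. -/
theorem imh_finite_eigen (m : ℕ) (tgt prp : Fin (m + 2) → ℝ)
    (htgt_pos : ∀ i, 0 < tgt i) (hprp_pos : ∀ i, 0 < prp i)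
    (htgt_sum : ∑ i, tgt i = 1) (hprp_sum : ∑ i, prp i = 1)
    (hmono : ∀ i j : Fin (m + 2), i ≤ j → tgt j / prp j ≤ tgt i / prp i) :
    ((imhMatrix tgt prp).mulVec (fun _ => (1 : ℝ)) = fun _ => (1 : ℝ))
    ∧ (∀ κ : Fin (m + 2), (κ : ℕ) + 1 < m + 2 →
        (imhMatrix tgt prp).mulVec (imhEigVec tgt prp κ) =
          imhEigVal tgt prp κ • imhEigVec tgt prp κ)
    ∧ (∀ κ : Fin (m + 2), (κ : ℕ) + 1 < m + 2 → imhEigVal tgt prp κ < 1)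
    ∧ (∀ κ κ' : Fin (m + 2), (κ : ℕ) + 1 < m + 2 → (κ' : ℕ) + 1 < m + 2 → κ ≤ κ' →
        imhEigVal tgt prp κ' ≤ imhEigVal tgt prp κ)
    ∧ (∀ κ : Fin (m + 2), (κ : ℕ) + 1 < m + 2 → 0 ≤ imhEigVal tgt prp κ)
    ∧ (∀ κ κ' : Fin (m + 2), (κ : ℕ) + 1 < m + 2 → (κ' : ℕ) + 1 < m + 2 → κ ≠ κ' →
        ∑ l, imhEigVec tgt prp κ l * imhEigVec tgt prp κ' l * tgt l = 0) := by
  obtain ⟨hone, heig, hlt, hanti, hnonneg, horth⟩ :=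
    imh_finite_eigen_general htgt_pos hprp_pos fun i j h => hmono i j h
  rw [hprp_sum] at hone hlt
  exact ⟨hone, fun κ _ => heig κ, fun κ _ => hlt κ, fun _ _ _ _ h => hanti h,
    fun κ _ => hnonneg κ, fun _ _ _ _ h => horth h⟩
end

section
/- Let P be a Markov kernel on a measurable space (X, F) in which the diagonal is measurable, with invariant probability measure π (i.e. ∫ P(x, A) π(dx) = π(A) for all A ∈ F) such that π is atomless, and let R(x) = P(x, {x}) denote the holding (rejection) probability at x. If the π-essential supremum of R equals 1, then P is not geometrically ergodic: there do not exist a constant r ∈ (0,1) and a function C : X → [0, ∞) such that ‖P^n(x,·) − π‖_TV ≤ C(x)·r^n for all n ≥ 1 and π-almost every x. -/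
open MeasureTheory

/-- Total variation distance between two measures. -/
noncomputable def tvDist {X : Type*} [MeasurableSpace X] (μ ν : Measure X) : ℝ :=
  ⨆ A : {s : Set X // MeasurableSet s}, |(μ A.1).toReal - (ν A.1).toReal|

/-- `n`-step kernel (n-fold composition) of a Markov kernel. -/
noncomputable def kiter {X : Type*} [MeasurableSpace X] (P : X → Measure X) : ℕ → X → Measure X
  | 0, x => Measure.dirac x
  | (n + 1), x => (kiter P n x).bind P

/-! A chain started at `x` stays there for `n` steps with probability at least `P x {x} ^ n`, and an
atomless `π` gives the singleton `{x}` no mass, so testing the total variation distance on `{x}`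
alone shows that convergence at rate `r` from `x` forces `P x {x} ≤ r`. -/

lemma abs_measureReal_sub_le_tvDist {X : Type*} [MeasurableSpace X] (μ ν : Measure X)
    [IsFiniteMeasure μ] [IsFiniteMeasure ν] {s : Set X} (hs : MeasurableSet s) :
    |μ.real s - ν.real s| ≤ tvDist μ ν := by
  refine le_ciSup (f := fun A : {s : Set X // MeasurableSet s} ↦ |μ.real A.1 - ν.real A.1|)
    ⟨max (μ.real .univ) (ν.real .univ), ?_⟩ ⟨s, hs⟩
  rintro _ ⟨A, rfl⟩
  exact abs_sub_le_of_nonneg_of_le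
    measureReal_nonneg ((measureReal_mono A.1.subset_univ).trans (le_max_left _ _))
    measureReal_nonneg ((measureReal_mono A.1.subset_univ).trans (le_max_right _ _))

lemma apply_mul_measure_singleton_le_bind {X Y : Type*} [MeasurableSpace X] [MeasurableSpace Y]
    {P : X → Measure Y} (hP : Measurable P) (μ : Measure X) (x : X) {s : Set Y}
    (hs : MeasurableSet s) : P x s * μ {x} ≤ μ.bind P s :=
  calc P x s * μ {x} = ∫⁻ y in {x}, P y s ∂μ :=
        (lintegral_singleton' ((Measure.measurable_coe hs).comp hP) x).symm
    _ ≤ ∫⁻ y, P y s ∂μ := setLIntegral_le_lintegral _ _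
    _ = μ.bind P s := (Measure.bind_apply hs hP.aemeasurable).symm

lemma le_of_frequently_pow_le_mul_pow {a r C : ℝ} (hr : 0 ≤ r)
    (h : ∃ᶠ n : ℕ in Filter.atTop, a ^ n ≤ C * r ^ n) : a ≤ r := by
  by_contra! hra
  have ha : 0 < a := hr.trans_lt hra
  have ratio_tendsto : Filter.Tendsto (fun n : ℕ ↦ C * (r / a) ^ n) Filter.atTop (nhds 0) := by
    simpa using (tendsto_pow_atTop_nhds_zero_of_lt_one (by positivity)
      ((div_lt_one ha).2 hra)).const_mul C
  refine h ((ratio_tendsto.eventually_lt_const one_pos).mono fun n hn ↦ not_le.2 ?_)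
  rwa [div_pow, ← mul_div_assoc, div_lt_one (by positivity)] at hn

section MarkovKernel

variable {X : Type*} [MeasurableSpace X] {P : X → Measure X}

lemma isProbabilityMeasure_kiter (hP : Measurable P) (hPprob : ∀ x, IsProbabilityMeasure (P x))
    (n : ℕ) (x : X) : IsProbabilityMeasure (kiter P n x) := by
  induction n with
  | zero => exact Measure.dirac.isProbabilityMeasure
  | succ n ih => exact isProbabilityMeasure_bind hP.aemeasurable (.of_forall hPprob)

lemma pow_apply_singleton_le_kiter (hP : Measurable P) {x : X} (hx : MeasurableSet {x}) (n : ℕ) :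
    P x {x} ^ n ≤ kiter P n x {x} := by
  induction n with
  | zero => simp [kiter]
  | succ n ih =>
    calc P x {x} ^ (n + 1) = P x {x} * P x {x} ^ n := pow_succ' _ _
      _ ≤ P x {x} * kiter P n x {x} := by gcongr
      _ ≤ kiter P (n + 1) x {x} := apply_mul_measure_singleton_le_bind hP _ x hx

lemma pow_measureReal_singleton_le_tvDist_kiter (hP : Measurable P)
    (hPprob : ∀ x, IsProbabilityMeasure (P x)) {π : Measure X} [IsFiniteMeasure π] {x : X}
    (hx : MeasurableSet {x}) (hπx : π {x} = 0) (n : ℕ) :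
    (P x).real {x} ^ n ≤ tvDist (kiter P n x) π := by
  have := isProbabilityMeasure_kiter hP hPprob n x
  calc (P x).real {x} ^ n ≤ (kiter P n x).real {x} := by
        rw [measureReal_def, ← ENNReal.toReal_pow]
        exact ENNReal.toReal_mono (measure_ne_top _ _) (pow_apply_singleton_le_kiter hP hx n)
    _ ≤ |(kiter P n x).real {x} - π.real {x}| := by
        rw [measureReal_def π, hπx, ENNReal.toReal_zero, sub_zero]
        exact le_abs_self _
    _ ≤ tvDist (kiter P n x) π := abs_measureReal_sub_le_tvDist _ _ hx

theorem essSup_apply_singleton_le_of_tvDist_kiter_le [MeasurableSingletonClass X]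
    (hP : Measurable P) (hPprob : ∀ x, IsProbabilityMeasure (P x))
    {π : Measure X} [IsFiniteMeasure π] [NullSingletonClass π] {r : ℝ} (hr : 0 ≤ r) {C : X → ℝ}
    (h : ∀ᵐ x ∂π, ∃ᶠ n : ℕ in Filter.atTop, tvDist (kiter P n x) π ≤ C x * r ^ n) :
    essSup (fun x ↦ P x {x}) π ≤ ENNReal.ofReal r := by
  refine essSup_le_of_ae_le _ (h.mono fun x hx ↦ ?_)
  have := hPprob x
  rw [ENNReal.le_ofReal_iff_toReal_le (measure_ne_top _ _) hr]
  exact le_of_frequently_pow_le_mul_pow hr <| hx.mono fun n hn ↦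
    (pow_measureReal_singleton_le_tvDist_kiter hP hPprob (measurableSet_singleton x)
      (measure_singleton x) n).trans hn

end MarkovKernel

theorem essSup_rejection_one_not_geometrically_ergodic_general
    {X : Type*} [MeasurableSpace X] [MeasurableSingletonClass X]
    {P : X → Measure X} (hP : Measurable P) (hPprob : ∀ x, IsProbabilityMeasure (P x))
    {π : Measure X} [IsFiniteMeasure π] [NullSingletonClass π]
    (hess : essSup (fun x ↦ P x {x}) π = 1) :
    ¬ ∃ (r : ℝ) (C : X → ℝ), 0 ≤ r ∧ r < 1 ∧
        ∀ᵐ x ∂π, ∃ᶠ n : ℕ in Filter.atTop, tvDist (kiter P n x) π ≤ C x * r ^ n := by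
  rintro ⟨r, C, hr0, hr1, h⟩
  have one_le : 1 ≤ ENNReal.ofReal r :=
    hess ▸ essSup_apply_singleton_le_of_tvDist_kiter_le hP hPprob hr0 h
  exact hr1.not_ge (ENNReal.one_le_ofReal.1 one_le)

/-- if a Markov kernel `P` (on a measurable space with measurable diagonal)
has an atomless invariant probability measure `π`, and the `π`-essential supremum of the
holding probability `R(x) = P(x, {x})` equals `1`, then `P` is not geometrically ergodic:
there are no `r ∈ (0,1)` and `C : X → [0,∞)` with `‖Pⁿ(x,·) − π‖_TV ≤ C(x)·rⁿ` for all
`n ≥ 1` and `π`-almost every `x`. -/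
theorem essSup_rejection_one_not_geometrically_ergodic
    {X : Type*} [MeasurableSpace X]
    (hdiag : MeasurableSet {q : X × X | q.1 = q.2})
    (P : X → Measure X) (hPmeas : Measurable P)
    (hPprob : ∀ x, IsProbabilityMeasure (P x))
    (πm : Measure X) (hπprob : IsProbabilityMeasure πm)
    (hinv : ∀ A : Set X, MeasurableSet A → ∫⁻ x, P x A ∂πm = πm A)
    (hatomless : ∀ x : X, πm {x} = 0)
    (hess : essSup (fun x => P x {x}) πm = 1) :
    ¬ ∃ (r : ℝ) (C : X → ℝ), 0 < r ∧ r < 1 ∧ (∀ x, 0 ≤ C x) ∧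
        ∀ᵐ x ∂πm, ∀ n : ℕ, 1 ≤ n → tvDist (kiter P n x) πm ≤ C x * r ^ n := by
  have : MeasurableEq X := ⟨hdiag⟩
  have : NullSingletonClass πm := ⟨hatomless⟩
  exact fun ⟨r, C, hr0, hr1, _, h⟩ ↦
    essSup_rejection_one_not_geometrically_ergodic_general hPmeas hPprob hess
      ⟨r, C, hr0.le, hr1, h.mono fun _ hx ↦ (Filter.eventually_atTop.2 ⟨1, hx⟩).frequently⟩
end
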